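/- Let d ≥ 1 be an integer and let β ∈ (0, d). There exists a constant C > 0, depending only on d and β, such that for every t > 0 and every x ∈ ℝ^d with x ≠ 0, ∫_{ℝ^d} p_t(x − y) ‖y‖^{−β} dy ≤ C ‖x‖^{−β}. -/

import Mathlib

open MeasureTheory

noncomputable def heatKernel (d : ℕ) (t : ℝ) (x : EuclideanSpace ℝ (Fin d)) : ℝ :=
  (2 * Real.pi * t) ^ (-(d : ℝ) / 2) * Real.exp (-‖x‖ ^ 2 / (2 * t))

def box (d : ℕ) (R : ℝ) : Set (EuclideanSpace ℝ (Fin d)) :=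
  {x | ∀ i, |x i| ≤ R}

/-!
Put `r = ‖x‖ / 2` and `z = x - y`. Where `r ≤ ‖y‖`, the weight `‖y‖ ^ (-β)` is at most `r ^ (-β)`
and the kernel has total mass one. Where `‖y‖ < r`, we have `r ≤ ‖z‖`, so `p_t(z) ≤ K r ^ (-d)`
uniformly in `t`, and by scaling the weight integrates to a multiple of `r ^ (d - β)`.
The kernel enters only through its positivity, its mass and the scale-invariant bound
`‖z‖ ^ d p_t(z) ≤ K`.
-/

open Metric Module Real

section PointwiseBound

variable {E : Type*} [SeminormedAddCommGroup E] {k : E → ℝ} {n : ℕ} {K r : ℝ} {x : E}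

lemma apply_sub_le_div_pow_of_norm_lt (hk : ∀ z, 0 ≤ k z) (hK : ∀ z, ‖z‖ ^ n * k z ≤ K)
    (hr : 0 < r) (hx : 2 * r ≤ ‖x‖) {y : E} (hy : ‖y‖ < r) : k (x - y) ≤ K / r ^ n := by
  have hxy : r ≤ ‖x - y‖ := by linarith [norm_sub_norm_le x y]
  rw [le_div_iff₀' (by positivity)]
  calc
    r ^ n * k (x - y) ≤ ‖x - y‖ ^ n * k (x - y) := by gcongr; exact hk _
    _ ≤ K := hK _

lemma apply_sub_mul_norm_rpow_neg_le_add_indicator {β : ℝ} (hβ : 0 ≤ β) (hk : ∀ z, 0 ≤ k z)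
    (hK : ∀ z, ‖z‖ ^ n * k z ≤ K) (hr : 0 < r) (hx : 2 * r ≤ ‖x‖) (y : E) :
    k (x - y) * ‖y‖ ^ (-β) ≤
      r ^ (-β) * k (x - y) + K / r ^ n * (ball 0 r).indicator (fun w ↦ ‖w‖ ^ (-β)) y := by
  have hkxy := hk (x - y)
  by_cases hy : ‖y‖ < r
  · have near : k (x - y) * ‖y‖ ^ (-β) ≤ K / r ^ n * ‖y‖ ^ (-β) := by
      gcongr
      exact apply_sub_le_div_pow_of_norm_lt hk hK hr hx hy
    rw [Set.indicator_of_mem (mem_ball_zero_iff.mpr hy)]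
    exact near.trans (le_add_of_nonneg_left (by positivity))
  · have far : ‖y‖ ^ (-β) ≤ r ^ (-β) :=
      rpow_le_rpow_of_nonpos hr (not_lt.mp hy) (neg_nonpos.mpr hβ)
    rw [Set.indicator_of_notMem (mem_ball_zero_iff.not.mpr hy), mul_zero, add_zero, mul_comm]
    gcongr

end PointwiseBound

section Convolution

variable {E : Type*} [NormedAddCommGroup E] [NormedSpace ℝ E] [FiniteDimensional ℝ E]
  [MeasurableSpace E] [BorelSpace E] (μ : Measure E) [μ.IsAddHaarMeasure]

lemma integrableOn_ball_norm_rpow_neg [Nontrivial E] {β : ℝ} (hβ : β < finrank ℝ E) (r : ℝ) :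
    IntegrableOn (fun y : E ↦ ‖y‖ ^ (-β)) (ball 0 r) μ :=
  integrableOn_ball_of_norm_le_rpow (C := 1) finrank_pos hβ
    (.of_forall fun y ↦ by rw [one_mul, norm_of_nonneg (by positivity)])
    (measurable_norm.pow_const (-β)).aestronglyMeasurable

lemma setIntegral_ball_norm_rpow_eq_mul_unitBall (s : ℝ) {r : ℝ} (hr : 0 < r) :
    ∫ y in ball (0 : E) r, ‖y‖ ^ s ∂μ =
      r ^ finrank ℝ E * r ^ s * ∫ y in ball (0 : E) 1, ‖y‖ ^ s ∂μ := by
  have hscale := Measure.setIntegral_comp_smul_of_pos μ (fun y : E ↦ ‖y‖ ^ s) (ball 0 1) hr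
  simp only [norm_smul, norm_of_nonneg hr.le, mul_rpow hr.le (norm_nonneg _), integral_const_mul,
    smul_unitBall_of_pos hr, smul_eq_mul] at hscale
  rw [mul_assoc, hscale, mul_inv_cancel_left₀ (by positivity)]

theorem integral_apply_sub_mul_norm_rpow_neg_le {β : ℝ} (hβ : 0 ≤ β) (hβn : β < finrank ℝ E)
    {k : E → ℝ} {K : ℝ} (hk : ∀ z, 0 ≤ k z) (hk_int : Integrable k μ)
    (hK : ∀ z, ‖z‖ ^ finrank ℝ E * k z ≤ K) {x : E} (hx : x ≠ 0) :
    ∫ y, k (x - y) * ‖y‖ ^ (-β) ∂μ ≤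
      2 ^ β * ((∫ z, k z ∂μ) + K * ∫ y in ball 0 1, ‖y‖ ^ (-β) ∂μ) * ‖x‖ ^ (-β) := by
  have : Nontrivial E := ⟨x, 0, hx⟩
  obtain ⟨r, hr, hxr⟩ : ∃ r, 0 < r ∧ ‖x‖ = 2 * r := ⟨‖x‖ / 2, by positivity, by ring⟩
  have far_int : Integrable (fun y ↦ r ^ (-β) * k (x - y)) μ :=
    (hk_int.comp_sub_left x).const_mul _
  have near_int : Integrable (fun y ↦
      K / r ^ finrank ℝ E * (ball 0 r).indicator (fun w : E ↦ ‖w‖ ^ (-β)) y) μ :=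
    ((integrableOn_ball_norm_rpow_neg μ hβn r).integrable_indicator measurableSet_ball).const_mul _
  calc
    ∫ y, k (x - y) * ‖y‖ ^ (-β) ∂μ
    _ ≤ ∫ y, r ^ (-β) * k (x - y) +
          K / r ^ finrank ℝ E * (ball 0 r).indicator (fun w ↦ ‖w‖ ^ (-β)) y ∂μ :=
      integral_mono_of_nonneg (.of_forall fun y ↦ mul_nonneg (hk _) (by positivity))
        (far_int.add near_int)
        (.of_forall (apply_sub_mul_norm_rpow_neg_le_add_indicator hβ hk hK hr hxr.ge))
    _ = r ^ (-β) * (∫ z, k z ∂μ) + K / r ^ finrank ℝ E * ∫ y in ball 0 r, ‖y‖ ^ (-β) ∂μ := by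
      rw [integral_add far_int near_int, integral_const_mul, integral_const_mul,
        integral_sub_left_eq_self k μ x, integral_indicator measurableSet_ball]
    _ = r ^ (-β) * ((∫ z, k z ∂μ) + K * ∫ y in ball 0 1, ‖y‖ ^ (-β) ∂μ) := by
      rw [setIntegral_ball_norm_rpow_eq_mul_unitBall μ _ hr]
      field_simp
    _ = 2 ^ β * ((∫ z, k z ∂μ) + K * ∫ y in ball 0 1, ‖y‖ ^ (-β) ∂μ) * ‖x‖ ^ (-β) := by
      rw [hxr, mul_rpow zero_le_two hr.le, rpow_neg zero_le_two]
      field_simp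

end Convolution

section HeatKernel

lemma rpow_mul_exp_neg_le {s u : ℝ} (hs : 0 ≤ s) (hu : 0 ≤ u) : u ^ s * exp (-u) ≤ s ^ s := by
  have h := ProbabilityTheory.rpow_abs_le_mul_exp_abs u hs one_ne_zero
  rw [exp_neg, ← div_eq_mul_inv, div_le_iff₀ (exp_pos u)]
  simpa only [abs_one, div_one, one_mul, abs_of_nonneg hu] using h

variable (d : ℕ) {t : ℝ}

lemma heatKernel_nonneg (ht : 0 ≤ t) (z : EuclideanSpace ℝ (Fin d)) : 0 ≤ heatKernel d t z := by
  unfold heatKernel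
  positivity

lemma integral_heatKernel (ht : 0 < t) : ∫ z, heatKernel d t z = 1 := by
  have gaussian := GaussianFourier.integral_rexp_neg_mul_sq_norm
    (V := EuclideanSpace ℝ (Fin d)) (b := (2 * t)⁻¹) (by positivity)
  have exponent (z : EuclideanSpace ℝ (Fin d)) : -‖z‖ ^ 2 / (2 * t) = -(2 * t)⁻¹ * ‖z‖ ^ 2 := by
    ring
  have normalization : π / (2 * t)⁻¹ = 2 * π * t := by field_simp
  simp only [heatKernel, exponent]
  rw [integral_const_mul, gaussian, finrank_euclideanSpace_fin, normalization,
    ← rpow_add (by positivity), neg_div, neg_add_cancel, rpow_zero]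

lemma integrable_heatKernel (ht : 0 < t) : Integrable (heatKernel d t) :=
  integrable_of_integral_eq_one (integral_heatKernel d ht)

lemma norm_pow_mul_heatKernel_le (ht : 0 < t) (z : EuclideanSpace ℝ (Fin d)) :
    ‖z‖ ^ d * heatKernel d t z ≤ π ^ (-(d : ℝ) / 2) * ((d : ℝ) / 2) ^ ((d : ℝ) / 2) := by
  obtain ⟨u, hu, hz⟩ : ∃ u, 0 ≤ u ∧ ‖z‖ ^ 2 = 2 * t * u :=
    ⟨‖z‖ ^ 2 / (2 * t), by positivity, by field_simp⟩
  have norm_pow : ‖z‖ ^ d = (2 * t) ^ ((d : ℝ) / 2) * u ^ ((d : ℝ) / 2) := by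
    rw [← mul_rpow (by positivity) hu, ← hz, ← rpow_natCast_mul (norm_nonneg z), Nat.cast_ofNat,
      mul_div_cancel₀ _ two_ne_zero, rpow_natCast]
  have prefactor :
      (2 * π * t) ^ (-(d : ℝ) / 2) = π ^ (-(d : ℝ) / 2) * ((2 * t) ^ ((d : ℝ) / 2))⁻¹ := by
    rw [mul_right_comm, mul_comm, mul_rpow pi_nonneg (by positivity), neg_div,
      rpow_neg (by positivity : 0 ≤ 2 * t)]
  have exponent : -‖z‖ ^ 2 / (2 * t) = -u := by
    rw [hz]
    field_simp
  calc
    ‖z‖ ^ d * heatKernel d t z = π ^ (-(d : ℝ) / 2) * (u ^ ((d : ℝ) / 2) * exp (-u)) := by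
      rw [heatKernel, norm_pow, prefactor, exponent]
      field_simp
    _ ≤ π ^ (-(d : ℝ) / 2) * ((d : ℝ) / 2) ^ ((d : ℝ) / 2) := by
      gcongr
      exact rpow_mul_exp_neg_le (by positivity) hu

end HeatKernel

theorem stmt_0 (d : ℕ) (hd : 1 ≤ d) (β : ℝ) (hβ0 : 0 < β) (hβd : β < d) :
    ∃ C : ℝ, 0 < C ∧ ∀ t : ℝ, 0 < t → ∀ x : EuclideanSpace ℝ (Fin d), x ≠ 0 →
      (∫ y : EuclideanSpace ℝ (Fin d), heatKernel d t (x - y) * ‖y‖ ^ (-β)) ≤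
        C * ‖x‖ ^ (-β) := by
  let K := π ^ (-(d : ℝ) / 2) * ((d : ℝ) / 2) ^ ((d : ℝ) / 2)
  refine ⟨2 ^ β * (1 + K * ∫ y in ball (0 : EuclideanSpace ℝ (Fin d)) 1, ‖y‖ ^ (-β)),
    by positivity, fun t ht x hx ↦ ?_⟩
  have bound := integral_apply_sub_mul_norm_rpow_neg_le volume hβ0.le
    (by rwa [finrank_euclideanSpace_fin]) (heatKernel_nonneg d ht.le) (integrable_heatKernel d ht)
    (by simpa only [finrank_euclideanSpace_fin] using norm_pow_mul_heatKernel_le d ht) hx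
  rwa [integral_heatKernel d ht] at bound
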